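/- For all integers 0 ≤ i < j < k, the polynomial R_{2i}(q)·R_{j+k}(q)² + R_{2j}(q)·R_{i+k}(q)² + R_{2k}(q)·R_{i+j}(q)² − 3·R_{i+j}(q)·R_{j+k}(q)·R_{k+i}(q) is q-nonnegative, where R_n(q) is the n-th Schröder polynomial. -/

import Mathlib

/-!
Write `a, b, c` for `R_{2i}, R_{2j}, R_{2k}` and `x, y, z` for `R_{i+j}, R_{j+k}, R_{i+k}`. Then the
polynomial in question is `x (x c - y z) + (a y² - 2 x y z + b z²)`, and both summands are
`q`-nonnegative, because the Hankel matrix of the Schröder polynomials factors through a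
coefficientwise totally positive array.

* The Stieltjes tableau `tabL` is defined by `q`-nonnegative bidiagonal steps. The Jacobi operator
  sending row `n` to row `n + 1` is self-adjoint for the weights `d_m = (q (1 + q)) ^ m`, so
  `∑ d_m L_{i,m} L_{j,m} = L_{i+j,0}` (`hankel_eq`).
* Lagrange inversion for `w = x φ(w)`, `φ(w) = (1 + w)(1 + q + q w)`, gives the entries of the
  auxiliary array `tabV` (`lagrange`), whence `L_{n,0} = R_n` (`tabL_zero_eq`).
* For rows `u, v, w` of the tableau, in this order, the minors `u_m v_n - u_n v_m` (`m < n`) and the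
  forms `w_β Δ_{αγ} - w_α Δ_{βγ}` (`α < β < γ`, `Δ` the minors of `u, v`) are `q`-nonnegative: this
  holds when `u` is the initial row, and bidiagonal steps preserve it (`TriplePos.bd`).
* Expanding the two summands over the factorization and symmetrizing the summation indices
  exhibits them as sums of products of these quantities (`form_two`, `form_three`).
-/

open Polynomial

/-- A polynomial is `q`-nonnegative if all of its coefficients are nonnegative. -/
def QNonneg (f : Polynomial ℝ) : Prop := ∀ i, 0 ≤ f.coeff i

/-- The `n`-th Schröder polynomial
`R_n(q) = Σ_{k=0}^{n} C(n+k, n-k) · C_k · q^k`, where `C_k = C(2k,k)/(k+1)`. -/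
noncomputable def schroderPoly (n : ℕ) : Polynomial ℝ :=
  ∑ k ∈ Finset.range (n + 1),
    Polynomial.C (((n + k).choose (n - k) : ℝ) * (((2 * k).choose k : ℝ) / (k + 1))) *
      Polynomial.X ^ k

namespace Schroder

/-! ### The cone of `q`-nonnegative polynomials -/

lemma QNonneg.add {f g : ℝ[X]} (hf : QNonneg f) (hg : QNonneg g) : QNonneg (f + g) := by
  intro i
  rw [coeff_add]
  exact add_nonneg (hf i) (hg i)

lemma QNonneg.mul {f g : ℝ[X]} (hf : QNonneg f) (hg : QNonneg g) : QNonneg (f * g) := by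
  intro i
  rw [coeff_mul]
  exact Finset.sum_nonneg fun p _ => mul_nonneg (hf _) (hg _)

lemma qn_zero : QNonneg 0 := fun i => by simp

lemma qn_one : QNonneg 1 := fun i => by
  rw [coeff_one]; split_ifs <;> norm_num

lemma qn_X : QNonneg X := fun i => by
  rw [coeff_X]; split_ifs <;> norm_num

lemma qn_oneX : QNonneg (1 + X) := QNonneg.add qn_one qn_X

lemma QNonneg.pow {f : ℝ[X]} (hf : QNonneg f) (n : ℕ) : QNonneg (f ^ n) := by
  induction n with
  | zero => simpa using qn_one
  | succ n ih => rw [pow_succ]; exact QNonneg.mul ih hf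

lemma QNonneg.sum {ι : Type*} (s : Finset ι) (f : ι → ℝ[X]) (h : ∀ a ∈ s, QNonneg (f a)) :
    QNonneg (∑ a ∈ s, f a) := by
  intro i
  rw [finsetSum_coeff]
  exact Finset.sum_nonneg fun a ha => h a ha i

lemma qn_of_natCast_mul {f : ℝ[X]} (n : ℕ) (hn : 0 < n) (h : QNonneg ((n : ℝ[X]) * f)) :
    QNonneg f := by
  intro i
  have h1 := h i
  rw [← C_eq_natCast, coeff_C_mul] at h1
  have : (0 : ℝ) < n := by exact_mod_cast hn
  exact nonneg_of_mul_nonneg_right h1 this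

/-! ### Bidiagonal steps and the tableau -/

/-- The action on rows of an upper bidiagonal step, `u_m ↦ u_m + c u_{m+1}`. -/
noncomputable def bd (c : ℝ[X]) (u : ℕ → ℝ[X]) (m : ℕ) : ℝ[X] := u m + c * u (m + 1)

/-- The right shift of a row, with `0` inserted at the front. -/
noncomputable def sh (u : ℕ → ℝ[X]) : ℕ → ℝ[X]
  | 0 => 0
  | m + 1 => u m

/-- The auxiliary array: `(1 + q) ^ m * tabV n m` is the coefficient of `x ^ n` in `w ^ m`, where
`w = x (1 + w) (1 + q + q w)`. -/
noncomputable def tabV : ℕ → ℕ → ℝ[X]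
  | 0 => fun m => if m = 0 then 1 else 0
  | n + 1 => sh (bd X (bd (1 + X) (tabV n)))

/-- The Stieltjes tableau of the Schröder polynomials, whose column `0` is `R_n`. -/
noncomputable def tabL (n : ℕ) : ℕ → ℝ[X] := bd (1 + X) (tabV n)

lemma tabL_succ (n : ℕ) : tabL (n + 1) = bd (1 + X) (sh (bd X (tabL n))) := rfl

lemma tabL_zero (m : ℕ) : tabL 0 m = if m = 0 then 1 else 0 := by
  simp [tabL, bd, tabV]

lemma tabL_succ_zero (n : ℕ) : tabL (n + 1) 0 = (1 + X) * (tabL n 0 + X * tabL n 1) := by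
  simp [tabL_succ, bd, sh]

lemma tabL_succ_succ (n m : ℕ) : tabL (n + 1) (m + 1) =
    tabL n m + X * tabL n (m + 1) + (1 + X) * (tabL n (m + 1) + X * tabL n (m + 2)) := by
  simp [tabL_succ, bd, sh]

lemma tabL_eq_zero (n m : ℕ) (h : n < m) : tabL n m = 0 := by
  induction n generalizing m with
  | zero => rw [tabL_zero, if_neg (by omega)]
  | succ n ih =>
    obtain ⟨m, rfl⟩ : ∃ m', m = m' + 1 := ⟨m - 1, by omega⟩
    rw [tabL_succ_succ, ih m (by omega), ih (m + 1) (by omega), ih (m + 2) (by omega)]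
    ring

lemma tabL_nonneg (n m : ℕ) : QNonneg (tabL n m) := by
  induction n generalizing m with
  | zero => rw [tabL_zero]; split_ifs <;> simp [qn_one, qn_zero]
  | succ n ih =>
    have hs : ∀ m, QNonneg (tabL n m + X * tabL n (m + 1)) := fun m =>
      QNonneg.add (ih m) (QNonneg.mul qn_X (ih _))
    cases m with
    | zero => rw [tabL_succ_zero]; exact QNonneg.mul qn_oneX (hs 0)
    | succ m => rw [tabL_succ_succ]; exact QNonneg.add (hs m) (QNonneg.mul qn_oneX (hs (m + 1)))

/-! ### Factorization of the Hankel matrix -/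

/-- The weights `d_m` in the factorization `H = L D Lᵀ` of the Hankel matrix. -/
noncomputable def wt (m : ℕ) : ℝ[X] := (X * (1 + X)) ^ m

lemma wt_nonneg (m : ℕ) : QNonneg (wt m) := QNonneg.pow (QNonneg.mul qn_X qn_oneX) m

/-- The weighted pairing of two rows, truncated to the columns below `N`. -/
noncomputable def pair (N : ℕ) (u v : ℕ → ℝ[X]) : ℝ[X] := ∑ m ∈ Finset.range N, wt m * (u m * v m)

/-- Self-adjointness of the Jacobi operator, with the boundary term of the truncation. -/
lemma pair_boundary (N i j : ℕ) :
    pair (N + 1) (tabL (i + 1)) (tabL j) - pair (N + 1) (tabL i) (tabL (j + 1)) =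
      wt (N + 1) * (tabL i (N + 1) * tabL j N - tabL i N * tabL j (N + 1)) := by
  induction N with
  | zero => simp [pair, wt, tabL_succ_zero]; ring
  | succ N ih =>
    unfold pair at ih ⊢
    rw [Finset.sum_range_succ, Finset.sum_range_succ _ (N + 1), add_sub_add_comm, ih,
      tabL_succ_succ, tabL_succ_succ]
    simp only [wt]
    ring

lemma pair_shift (N i j : ℕ) (hi : i < N) (hj : j < N) :
    pair N (tabL (i + 1)) (tabL j) = pair N (tabL i) (tabL (j + 1)) := by
  obtain ⟨N, rfl⟩ : ∃ N', N = N' + 1 := ⟨N - 1, by omega⟩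
  have := pair_boundary N i j
  rw [tabL_eq_zero i _ hi, tabL_eq_zero j _ hj] at this
  simpa [sub_eq_zero] using this

lemma hankel_eq (N i j : ℕ) (h : i + j < N) : pair N (tabL i) (tabL j) = tabL (i + j) 0 := by
  induction i generalizing j with
  | zero =>
    unfold pair
    rw [Finset.sum_eq_single 0]
    · simp [wt, tabL_zero]
    · intro b _ hb
      simp [tabL_zero, hb]
    · intro h0
      simp at h0
      omega
  | succ i ih =>
    rw [pair_shift N i j (by omega) (by omega), ih (j + 1) (by omega)]
    congr 1
    omega

/-! ### Lagrange inversion: column zero of the tableau -/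

/-- The series `φ(w) = (1 + w) (1 + q (1 + w))`, as a polynomial in `w` over `ℝ[q]`. -/
noncomputable def phi : ℝ[X][X] := (1 + X) * (1 + C X * (1 + X))

lemma phi_eq : phi = C (1 + X) + C (1 + 2 * X) * X + C X * X ^ 2 := by
  simp only [phi, map_add, map_mul, map_one, map_ofNat]
  ring

/-- Euler's identity for the operator `w d/dw`. -/
lemma coeff_X_mul_derivative (G : ℝ[X][X]) (n : ℕ) :
    (X * derivative G).coeff n = (n : ℝ[X]) * G.coeff n := by
  cases n with
  | zero => simp
  | succ n => rw [coeff_X_mul, coeff_derivative]; push_cast; ring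

lemma tabV_succ_succ (n m : ℕ) : tabV (n + 1) (m + 1) =
    tabV n m + (1 + X) * tabV n (m + 1) + X * (tabV n (m + 1) + (1 + X) * tabV n (m + 2)) := by
  simp [tabV, bd, sh]

lemma tabV_succ_zero (n : ℕ) : tabV (n + 1) 0 = 0 := by
  simp [tabV, sh]

/-- Lagrange inversion: `n [xⁿ] w ^ m = m [wⁿ] w ^ m φ ^ n`. -/
lemma lagrange (n m : ℕ) :
    ((n + 1 : ℕ) : ℝ[X]) * ((1 + X) ^ m * tabV (n + 1) m) =
      (m : ℝ[X]) * (X ^ m * phi ^ (n + 1)).coeff (n + 1) := by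
  induction n generalizing m with
  | zero =>
    rcases m with _ | _ | m
    · simp [tabV_succ_zero]
    · rw [tabV_succ_succ]
      simp [tabV, phi_eq, coeff_X_mul]
    · rw [tabV_succ_succ]
      have : (X ^ (m + 1 + 1) * phi ^ (0 + 1)).coeff (0 + 1) = 0 := by
        rw [coeff_X_pow_mul', if_neg (by omega)]
      rw [this]
      simp [tabV]
  | succ n ih =>
    cases m with
    | zero => simp [tabV_succ_zero]
    | succ m =>
      have hn : ((n + 1 : ℕ) : ℝ[X]) ≠ 0 := by exact_mod_cast Nat.succ_ne_zero n
      apply mul_left_cancel₀ hn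
      have h0 := ih m
      have h1 := ih (m + 1)
      have h2 := ih (m + 2)
      have e := coeff_X_mul_derivative (X ^ m * phi ^ (n + 2)) (n + 1)
      -- `w d/dw` of `w ^ m φ ^ (n + 2)`, split according to the monomials of `φ` and of `φ'`
      have hd : X * derivative (X ^ m * phi ^ (n + 2)) =
          C (m : ℝ[X]) * (X ^ m * phi ^ (n + 2))
          + C ((n + 2 : ℕ) : ℝ[X]) * (C (1 + 2 * X) * (X ^ (m + 1) * phi ^ (n + 1))
            + C (2 * X) * (X ^ (m + 2) * phi ^ (n + 1))) := by
        have hp : derivative phi = C (1 + 2 * X) + C (2 * X) * X := by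
          have h2 : (C 2 : ℝ[X][X]) = 2 := map_ofNat C 2
          rw [phi_eq]
          simp [h2]
          ring
        have hm : X * derivative (X ^ m : ℝ[X][X]) = C (m : ℝ[X]) * X ^ m := by
          cases m with
          | zero => simp
          | succ m => simp; ring
        rw [derivative_mul, mul_add, ← mul_assoc, hm, derivative_pow, hp]
        simp only [show n + 2 - 1 = n + 1 by omega]
        ring
      have hG : X ^ m * phi ^ (n + 2) =
          C (1 + X) * (X ^ m * phi ^ (n + 1)) + C (1 + 2 * X) * (X ^ (m + 1) * phi ^ (n + 1))
          + C X * (X ^ (m + 2) * phi ^ (n + 1)) := by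
        rw [pow_succ phi (n + 1)]
        nth_rewrite 2 [phi_eq]
        ring
      have hGc := congrArg (fun p => coeff p (n + 1)) hG
      rw [hd] at e
      simp only [coeff_add, coeff_C_mul] at e hGc
      have hl : (X ^ (m + 1) * phi ^ (n + 1 + 1)).coeff (n + 1 + 1) =
          (X ^ m * phi ^ (n + 2)).coeff (n + 1) := by
        rw [pow_succ', mul_assoc, coeff_X_mul]
      rw [hl, tabV_succ_succ (n + 1) m]
      generalize (X ^ m * phi ^ (n + 2)).coeff (n + 1) = g at *
      generalize (X ^ m * phi ^ (n + 1)).coeff (n + 1) = g0 at *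
      generalize (X ^ (m + 1) * phi ^ (n + 1)).coeff (n + 1) = g1 at *
      generalize (X ^ (m + 2) * phi ^ (n + 1)).coeff (n + 1) = g2 at *
      push_cast at *
      linear_combination ((n : ℝ[X]) + 2) * ((1 + X) * h0 + (1 + 2 * X) * h1 + X * h2)
        + e - ((m : ℝ[X]) * (n + 2)) * hGc

lemma choose_identity (k d : ℕ) (h : 0 < k + d) :
    ((k + d : ℕ) : ℝ) * (((k + d + k).choose (k + d - k) : ℝ) * (((2 * k).choose k : ℝ) / (k + 1)))
      = ((k + d).choose k : ℝ) * ((k + d + k).choose (k + d - 1) : ℝ) := by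
  obtain ⟨e, he⟩ : ∃ e, k + d = e + 1 := ⟨k + d - 1, by omega⟩
  rw [Nat.add_sub_cancel_left, two_mul, Nat.add_choose,
    Nat.cast_choose ℝ (show d ≤ k + d + k by omega),
    Nat.cast_choose ℝ (show k + d - 1 ≤ k + d + k by omega),
    Nat.cast_choose ℝ (show k ≤ k + d by omega),
    Nat.cast_div (Nat.factorial_mul_factorial_dvd_factorial_add k k) (by positivity),
    show k + d + k - d = k + k by omega, show k + d + k - (k + d - 1) = k + 1 by omega,
    show k + d - k = d by omega, he, Nat.add_sub_cancel, Nat.factorial_succ k,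
    Nat.factorial_succ e]
  push_cast
  field_simp

lemma phi_pow_coeff (n : ℕ) : (phi ^ (n + 1)).coeff n =
    ∑ k ∈ Finset.range (n + 1 + 1),
      C (((n + 1).choose k : ℝ) * ((n + 1 + k).choose n : ℝ)) * X ^ k := by
  have : phi ^ (n + 1) = ∑ k ∈ Finset.range (n + 1 + 1),
      C (X ^ k * ((n + 1).choose k : ℝ[X])) * (1 + X) ^ (n + 1 + k) := by
    rw [phi, mul_pow, add_comm 1 (C X * (1 + X)), add_pow (C X * (1 + X)), Finset.mul_sum]
    refine Finset.sum_congr rfl fun k _ => ?_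
    simp only [map_mul, map_pow, map_natCast, one_pow, mul_one]
    rw [mul_pow (C X : ℝ[X][X]), pow_add]
    ring
  rw [this, finsetSum_coeff]
  refine Finset.sum_congr rfl fun k _ => ?_
  rw [coeff_C_mul, coeff_one_add_X_pow]
  simp only [map_mul, map_natCast]
  ring

lemma tabL_zero_eq (n : ℕ) : tabL n 0 = schroderPoly n := by
  cases n with
  | zero => simp [tabL_zero, schroderPoly]
  | succ n =>
    have hn : ((n + 1 : ℕ) : ℝ[X]) ≠ 0 := by exact_mod_cast Nat.succ_ne_zero n
    apply mul_left_cancel₀ hn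
    have h := lagrange n 1
    rw [pow_one, pow_one, coeff_X_mul, phi_pow_coeff, Nat.cast_one, one_mul] at h
    have h0 : tabL (n + 1) 0 = (1 + X) * tabV (n + 1) 1 := by
      simp [tabL, bd, tabV_succ_zero]
    rw [h0, h, schroderPoly, Finset.mul_sum]
    refine Finset.sum_congr rfl fun k hk => ?_
    obtain ⟨d, hd⟩ : ∃ d, n + 1 = k + d := ⟨n + 1 - k, by simp at hk; omega⟩
    have := choose_identity k d (by omega)
    rw [← hd, Nat.add_sub_cancel] at this
    rw [← this, C_mul, ← mul_assoc, C_eq_natCast]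

/-! ### Positivity of the tableau -/

/-- The minor of the rows `u, v` in the columns `m, n`. -/
noncomputable def minor (u v : ℕ → ℝ[X]) (m n : ℕ) : ℝ[X] := u m * v n - u n * v m

/-- The form `w_β Δ_{αγ} - w_α Δ_{βγ}`, where `Δ` is the minor of `u, v`. It equals
`w_γ Δ_{αβ}` minus the determinant of the rows `u, v, w` in the columns `α, β, γ`. -/
noncomputable def tri (u v w : ℕ → ℝ[X]) (α β γ : ℕ) : ℝ[X] :=
  w β * minor u v α γ - w α * minor u v β γ

/-- The positivity properties of three rows that bidiagonal steps preserve. -/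
structure TriplePos (u v w : ℕ → ℝ[X]) : Prop where
  nonneg : ∀ m, QNonneg (w m)
  minor_lt : ∀ m n, m < n → QNonneg (minor u v m n)
  tri_lt : ∀ α β γ, α < β → β < γ → QNonneg (tri u v w α β γ)

variable {u v w : ℕ → ℝ[X]}

lemma TriplePos.minor_le (h : TriplePos u v w) (m n : ℕ) (hmn : m ≤ n) :
    QNonneg (minor u v m n) := by
  rcases hmn.lt_or_eq with hlt | rfl
  · exact h.minor_lt _ _ hlt
  · have : minor u v m m = 0 := by unfold minor; ring
    rw [this]; exact qn_zero

lemma TriplePos.tri_le (h : TriplePos u v w) (α β γ : ℕ) (h1 : α ≤ β) (h2 : β ≤ γ) :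
    QNonneg (tri u v w α β γ) := by
  rcases h1.lt_or_eq with h1 | rfl
  · rcases h2.lt_or_eq with h2 | rfl
    · exact h.tri_lt _ _ _ h1 h2
    · have : tri u v w α β β = w β * minor u v α β := by unfold tri minor; ring
      rw [this]
      exact QNonneg.mul (h.nonneg _) (h.minor_lt _ _ h1)
  · have : tri u v w α α γ = 0 := by unfold tri; ring
    rw [this]; exact qn_zero

lemma TriplePos.sh (h : TriplePos u v w) : TriplePos (sh u) (sh v) (sh w) where
  nonneg m := by
    cases m with
    | zero => exact qn_zero
    | succ m => exact h.nonneg m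
  minor_lt m n hmn := by
    obtain ⟨n, rfl⟩ : ∃ n', n = n' + 1 := ⟨n - 1, by omega⟩
    cases m with
    | zero => simpa [minor, Schroder.sh] using qn_zero
    | succ m => exact h.minor_lt m n (by omega)
  tri_lt α β γ h1 h2 := by
    obtain ⟨β, rfl⟩ : ∃ n', β = n' + 1 := ⟨β - 1, by omega⟩
    obtain ⟨γ, rfl⟩ : ∃ n', γ = n' + 1 := ⟨γ - 1, by omega⟩
    cases α with
    | zero => simpa [tri, minor, Schroder.sh] using qn_zero
    | succ α => exact h.tri_lt α β γ (by omega) (by omega)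

/-- Multilinear expansion only meets weakly increasing column indices. -/
lemma TriplePos.bd (h : TriplePos u v w) {c : ℝ[X]} (hc : QNonneg c) :
    TriplePos (bd c u) (bd c v) (bd c w) where
  nonneg m := QNonneg.add (h.nonneg m) (QNonneg.mul hc (h.nonneg _))
  minor_lt m n hmn := by
    have e : minor (Schroder.bd c u) (Schroder.bd c v) m n =
        minor u v m n + c * (minor u v (m + 1) n + minor u v m (n + 1))
          + c ^ 2 * minor u v (m + 1) (n + 1) := by
      unfold minor Schroder.bd; ring
    have hM := h.minor_le
    rw [e]
    refine QNonneg.add (QNonneg.add (hM _ _ (by omega)) (QNonneg.mul hc (QNonneg.add ?_ ?_)))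
      (QNonneg.mul (QNonneg.pow hc 2) ?_) <;> exact hM _ _ (by omega)
  tri_lt α β γ h1 h2 := by
    have e : tri (Schroder.bd c u) (Schroder.bd c v) (Schroder.bd c w) α β γ =
        tri u v w α β γ
          + c * (tri u v w (α + 1) β γ + tri u v w α (β + 1) γ + tri u v w α β (γ + 1))
          + c ^ 2 * (tri u v w (α + 1) (β + 1) γ + tri u v w (α + 1) β (γ + 1)
            + tri u v w α (β + 1) (γ + 1))
          + c ^ 3 * tri u v w (α + 1) (β + 1) (γ + 1) := by
      unfold tri minor Schroder.bd; ring
    have hT := h.tri_le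
    rw [e]
    refine QNonneg.add (QNonneg.add (QNonneg.add (hT _ _ _ (by omega) (by omega))
      (QNonneg.mul hc (QNonneg.add (QNonneg.add ?_ ?_) ?_)))
      (QNonneg.mul (QNonneg.pow hc 2) (QNonneg.add (QNonneg.add ?_ ?_) ?_)))
      (QNonneg.mul (QNonneg.pow hc 3) ?_) <;> exact hT _ _ _ (by omega) (by omega)

lemma triplePos_tabL (i a b : ℕ) : TriplePos (tabL i) (tabL (i + a)) (tabL (i + b)) := by
  induction i with
  | zero =>
    have hM : ∀ m n, m < n → minor (tabL 0) (tabL (0 + a)) m n =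
        if m = 0 then tabL (0 + a) n else 0 := by
      intro m n hmn
      unfold minor
      rw [tabL_zero, tabL_zero, if_neg (show n ≠ 0 by omega)]
      split_ifs <;> simp
    refine ⟨fun m => tabL_nonneg _ _, fun m n hmn => ?_, fun α β γ h1 h2 => ?_⟩
    · rw [hM m n hmn]
      split_ifs
      · exact tabL_nonneg _ _
      · exact qn_zero
    · unfold tri
      rw [hM α γ (by omega), hM β γ h2, if_neg (show β ≠ 0 by omega), mul_zero, sub_zero]
      refine QNonneg.mul (tabL_nonneg _ _) ?_
      split_ifs
      · exact tabL_nonneg _ _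
      · exact qn_zero
  | succ i ih =>
    rw [show i + 1 + a = i + a + 1 by omega, show i + 1 + b = i + b + 1 by omega]
    simp only [tabL_succ]
    exact ((ih.bd qn_X).sh).bd qn_oneX

/-! ### The two nonnegative forms -/

/-- Cauchy–Binet for two rows against `w`, symmetrized over the pair of columns. -/
lemma form_two (N : ℕ) (u v w : ℕ → ℝ[X])
    (hu : ∀ m n, m ≤ n → QNonneg (minor u w m n)) (hv : ∀ m n, m ≤ n → QNonneg (minor v w m n)) :
    QNonneg (pair N u v * pair N w w - pair N v w * pair N u w) := by
  apply qn_of_natCast_mul 2 (by norm_num)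
  have e : ((2 : ℕ) : ℝ[X]) * (pair N u v * pair N w w - pair N v w * pair N u w) =
      ∑ m ∈ Finset.range N, ∑ n ∈ Finset.range N,
        wt m * wt n * (minor u w m n * minor v w m n) := by
    have : ((2 : ℕ) : ℝ[X]) * (pair N u v * pair N w w - pair N v w * pair N u w) =
        pair N u v * pair N w w - pair N v w * pair N u w
          + (pair N w w * pair N u v - pair N u w * pair N v w) := by
      push_cast; ring
    rw [this]
    unfold pair
    simp only [Finset.sum_mul_sum, ← Finset.sum_sub_distrib, ← Finset.sum_add_distrib]
    refine Finset.sum_congr rfl fun m _ => Finset.sum_congr rfl fun n _ => ?_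
    unfold minor; ring
  rw [e]
  refine QNonneg.sum _ _ fun m _ => QNonneg.sum _ _ fun n _ =>
    QNonneg.mul (QNonneg.mul (wt_nonneg m) (wt_nonneg n)) ?_
  rcases le_total m n with h | h
  · exact QNonneg.mul (hu _ _ h) (hv _ _ h)
  · have : minor u w m n * minor v w m n = minor u w n m * minor v w n m := by
      unfold minor; ring
    rw [this]
    exact QNonneg.mul (hu _ _ h) (hv _ _ h)

/-- The symmetrization over three columns of the summand `w_m w_p Δ_{nm} Δ_{np}`. -/
noncomputable def sym3 (u v w : ℕ → ℝ[X]) (n m p : ℕ) : ℝ[X] :=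
  w m * w p * (minor u v n m * minor u v n p) + w n * w p * (minor u v m n * minor u v m p)
    + w n * w m * (minor u v p n * minor u v p m)

lemma sym3_sorted (h : TriplePos u v w) (α β γ : ℕ) (h1 : α ≤ β) (h2 : β ≤ γ) :
    QNonneg (sym3 u v w α β γ) := by
  have e : sym3 u v w α β γ = w γ * minor u v α β * tri u v w α β γ
      + w α * w β * (minor u v α γ * minor u v β γ) := by
    unfold sym3 tri minor; ring
  rw [e]
  exact QNonneg.add
    (QNonneg.mul (QNonneg.mul (h.nonneg _) (h.minor_le _ _ h1)) (h.tri_le _ _ _ h1 h2))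
    (QNonneg.mul (QNonneg.mul (h.nonneg _) (h.nonneg _))
      (QNonneg.mul (h.minor_le _ _ (h1.trans h2)) (h.minor_le _ _ h2)))

lemma sym3_nonneg (h : TriplePos u v w) (n m p : ℕ) : QNonneg (sym3 u v w n m p) := by
  have s1 : ∀ a b c, sym3 u v w a b c = sym3 u v w b a c := fun a b c => by unfold sym3; ring
  have s2 : ∀ a b c, sym3 u v w a b c = sym3 u v w a c b := fun a b c => by unfold sym3; ring
  rcases le_total n m with h1 | h1 <;> rcases le_total m p with h2 | h2 <;>
    rcases le_total n p with h3 | h3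
  · exact sym3_sorted h _ _ _ h1 h2
  · exact sym3_sorted h _ _ _ h1 h2
  · rw [s2]; exact sym3_sorted h _ _ _ h3 h2
  · rw [s2, s1]; exact sym3_sorted h _ _ _ h3 h1
  · rw [s1]; exact sym3_sorted h _ _ _ h1 h3
  · rw [s1, s2]; exact sym3_sorted h _ _ _ h2 h3
  · rw [s1, s2, s1]; exact sym3_sorted h _ _ _ h2 h1
  · rw [s1, s2, s1]; exact sym3_sorted h _ _ _ h2 h1

/-- The quadratic form `a y² - 2 x y z + b z²` of the module header. -/
lemma form_three (N : ℕ) (h : TriplePos u v w) :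
    QNonneg (pair N u u * pair N v w ^ 2 - 2 * (pair N u v * pair N v w * pair N u w)
      + pair N v v * pair N u w ^ 2) := by
  apply qn_of_natCast_mul 3 (by norm_num)
  -- the three copies carry the three positions of the distinguished column
  have e : ((3 : ℕ) : ℝ[X]) * (pair N u u * pair N v w ^ 2
        - 2 * (pair N u v * pair N v w * pair N u w) + pair N v v * pair N u w ^ 2) =
      ∑ n ∈ Finset.range N, ∑ m ∈ Finset.range N, ∑ p ∈ Finset.range N,
        wt n * wt m * wt p * sym3 u v w n m p := by
    have hprod : ∀ f g k : ℕ → ℝ[X],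
        (∑ n ∈ Finset.range N, f n) * (∑ m ∈ Finset.range N, g m) * (∑ p ∈ Finset.range N, k p) =
          ∑ n ∈ Finset.range N, ∑ m ∈ Finset.range N, ∑ p ∈ Finset.range N, f n * g m * k p := by
      intro f g k
      rw [Finset.sum_mul_sum, Finset.sum_mul]
      refine Finset.sum_congr rfl fun n _ => ?_
      rw [Finset.sum_mul_sum]
    have : ((3 : ℕ) : ℝ[X]) * (pair N u u * pair N v w ^ 2
        - 2 * (pair N u v * pair N v w * pair N u w) + pair N v v * pair N u w ^ 2) =
        (pair N u u * pair N v w * pair N v w - pair N u v * pair N v w * pair N u w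
          - pair N u v * pair N u w * pair N v w + pair N v v * pair N u w * pair N u w)
        + (pair N v w * pair N u u * pair N v w - pair N v w * pair N u v * pair N u w
          - pair N u w * pair N u v * pair N v w + pair N u w * pair N v v * pair N u w)
        + (pair N v w * pair N v w * pair N u u - pair N v w * pair N u w * pair N u v
          - pair N u w * pair N v w * pair N u v + pair N u w * pair N u w * pair N v v) := by
      push_cast; ring
    rw [this]
    unfold pair
    simp only [hprod, ← Finset.sum_sub_distrib, ← Finset.sum_add_distrib]
    refine Finset.sum_congr rfl fun n _ => Finset.sum_congr rfl fun m _ =>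
      Finset.sum_congr rfl fun p _ => ?_
    unfold sym3 minor; ring
  rw [e]
  exact QNonneg.sum _ _ fun n _ => QNonneg.sum _ _ fun m _ => QNonneg.sum _ _ fun p _ =>
    QNonneg.mul (QNonneg.mul (QNonneg.mul (wt_nonneg n) (wt_nonneg m)) (wt_nonneg p))
      (sym3_nonneg h n m p)

end Schroder

open Schroder

theorem stmt14 (i j k : ℕ) (hij : i < j) (hjk : j < k) :
    QNonneg (schroderPoly (2 * i) * schroderPoly (j + k) ^ 2 +
             schroderPoly (2 * j) * schroderPoly (i + k) ^ 2 +
             schroderPoly (2 * k) * schroderPoly (i + j) ^ 2 -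
             3 * (schroderPoly (i + j) * schroderPoly (j + k) * schroderPoly (k + i))) := by
  have hH : ∀ a b, a ≤ k → b ≤ k →
      schroderPoly (a + b) = pair (2 * k + 1) (tabL a) (tabL b) := fun a b ha hb => by
    rw [hankel_eq _ _ _ (by omega), tabL_zero_eq]
  have hP : ∀ a b c, a ≤ b → a ≤ c → TriplePos (tabL a) (tabL b) (tabL c) := fun a b c hb hc => by
    have := triplePos_tabL a (b - a) (c - a)
    rwa [Nat.add_sub_cancel' hb, Nat.add_sub_cancel' hc] at this
  have h2 := form_two (2 * k + 1) (tabL i) (tabL j) (tabL k)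
    (hP i k k (by omega) (by omega)).minor_le (hP j k k (by omega) (by omega)).minor_le
  have h3 := form_three (2 * k + 1) (hP i j k (by omega) (by omega))
  have hx : QNonneg (pair (2 * k + 1) (tabL i) (tabL j)) := by
    rw [hankel_eq _ _ _ (by omega)]
    exact tabL_nonneg _ _
  rw [two_mul i, two_mul j, two_mul k, add_comm k i, hH i i (by omega) (by omega),
    hH j j (by omega) (by omega), hH k k le_rfl le_rfl, hH i j (by omega) (by omega),
    hH j k (by omega) le_rfl, hH i k (by omega) le_rfl]
  convert QNonneg.add (QNonneg.mul hx h2) h3 using 1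
  ring
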